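/- arXiv:1905.07829 — 2 statements merged into one kernel-verified Lean document; each statement's English description precedes it below -/
import Mathlib

section
/- Let G be the simple graph on vertex set {1,...,8} with edge set {{1,2},{1,3},{2,3},{2,4},{3,4},{5,6},{5,7},{6,8},{7,8},{1,5},{3,7},{4,8}}. Then for every injective map φ : {1,...,8} → ℝ² satisfying dist(φ(i), φ(j)) = 1 for every edge {i,j} of G, one has dist(φ(6), φ(7)) = 1 and dist(φ(2), φ(6)) = 1. (That is, G is a totally unfaithful unit-distance graph: the non-adjacent pairs {6,7} and {2,6} are at distance 1 in every embedding.) -/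
/-!
In the Euclidean plane a quadrilateral with four equal sides and distinct opposite vertices is a
parallelogram. The graph contains the rhombi `1243`, `3784`, `5687` and `1573`. By the first three,
the edge vectors `2 → 1`, `4 → 3`, `8 → 7` and `6 → 5` coincide, so `1265` is a parallelogram and
the vector `6 → 2` equals `5 → 1`, which equals `7 → 3` by the fourth. Hence `2673` is a
parallelogram too, and the distances `26` and `67` equal the edge lengths `15` and `23`.
-/

open Module

theorem vsub_eq_vsub_iff_vsub_eq_vsub {V P : Type*} [AddCommGroup V] [AddTorsor V P]
    {a b c d : P} : a -ᵥ b = c -ᵥ d ↔ a -ᵥ c = b -ᵥ d := by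
  rw [← sub_eq_zero, vsub_sub_vsub_comm, sub_eq_zero]

theorem dist_eq_dist_of_vsub_eq_vsub {V P : Type*} [SeminormedAddCommGroup V]
    [PseudoMetricSpace P] [NormedAddTorsor V P] {a b c d : P} (h : a -ᵥ b = c -ᵥ d) :
    dist a b = dist c d := by
  rw [dist_eq_norm_vsub V, h, ← dist_eq_norm_vsub V]

theorem eq_of_dist_eq_of_eq_midpoint {V P : Type*} [NormedAddCommGroup V] [NormedSpace ℝ V]
    [StrictConvexSpace ℝ V] [MetricSpace P] [NormedAddTorsor V P] {a b c d : P}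
    (ha : a = midpoint ℝ b d) (hb : dist b c = dist b a) (hd : dist c d = dist a d) : c = a := by
  subst ha
  apply eq_midpoint_of_dist_eq_half
  · rw [hb, dist_left_midpoint, Real.norm_two, inv_mul_eq_div]
  · rw [hd, dist_midpoint_right, Real.norm_two, inv_mul_eq_div]

section EuclideanPlane

variable {V P : Type*} [NormedAddCommGroup V] [InnerProductSpace ℝ V] [MetricSpace P]
  [NormedAddTorsor V P]

theorem midpoint_eq_midpoint_of_rhombus (hV : finrank ℝ V = 2) {a b c d : P} {r : ℝ}
    (hac : a ≠ c) (hbd : b ≠ d) (hab : dist a b = r) (hbc : dist b c = r) (had : dist a d = r)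
    (hdc : dist d c = r) : midpoint ℝ a c = midpoint ℝ b d := by
  have : FiniteDimensional ℝ V := .of_finrank_pos (hV ▸ two_pos)
  set σ := AffineIsometryEquiv.pointReflection ℝ (midpoint ℝ b d)
  have hσb : dist (σ a) b = r := by
    rw [← AffineIsometryEquiv.pointReflection_midpoint_right b d, σ.dist_map, had]
  have hσd : dist (σ a) d = r := by
    rw [← AffineIsometryEquiv.pointReflection_midpoint_left b d, σ.dist_map, hab]
  -- The circles of radius `r` around `b` and `d` meet in at most two points.
  obtain hσa | hσa : σ a = a ∨ σ a = c :=
    EuclideanGeometry.eq_of_dist_eq_of_dist_eq_of_finrank_eq_two hV hbd hac hab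
      (dist_comm b c ▸ hbc) hσb had (dist_comm d c ▸ hdc) hσd
  · have ha : a = midpoint ℝ b d := AffineIsometryEquiv.pointReflection_fixed_iff.mp hσa
    have hca : c = a := eq_of_dist_eq_of_eq_midpoint ha
      (by rw [hbc, dist_comm, hab]) (by rw [dist_comm, hdc, had])
    exact absurd hca.symm hac
  · exact midpoint_eq_iff.mpr hσa

theorem vsub_eq_vsub_of_rhombus (hV : finrank ℝ V = 2) {a b c d : P} {r : ℝ}
    (hac : a ≠ c) (hbd : b ≠ d) (hab : dist a b = r) (hbc : dist b c = r) (had : dist a d = r)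
    (hdc : dist d c = r) : a -ᵥ b = d -ᵥ c :=
  (midpoint_eq_midpoint_iff_vsub_eq_vsub ℝ).mp <|
    midpoint_eq_midpoint_of_rhombus hV hac hbd hab hbc had hdc

theorem totally_unfaithful_eight_general (hV : finrank ℝ V = 2) {p₁ p₂ p₃ p₄ p₅ p₆ p₇ p₈ : P}
    (n14 : p₁ ≠ p₄) (n17 : p₁ ≠ p₇) (n53 : p₅ ≠ p₃) (n38 : p₃ ≠ p₈) (n74 : p₇ ≠ p₄)
    (n58 : p₅ ≠ p₈) (n67 : p₆ ≠ p₇)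
    (h12 : dist p₁ p₂ = 1) (h13 : dist p₁ p₃ = 1) (h23 : dist p₂ p₃ = 1)
    (h24 : dist p₂ p₄ = 1) (h34 : dist p₃ p₄ = 1) (h56 : dist p₅ p₆ = 1)
    (h57 : dist p₅ p₇ = 1) (h68 : dist p₆ p₈ = 1) (h78 : dist p₇ p₈ = 1)
    (h15 : dist p₁ p₅ = 1) (h37 : dist p₃ p₇ = 1) (h48 : dist p₄ p₈ = 1) :
    dist p₆ p₇ = 1 ∧ dist p₂ p₆ = 1 := by
  have n23 : p₂ ≠ p₃ := dist_ne_zero.mp (h23 ▸ one_ne_zero)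
  have r1243 : p₁ -ᵥ p₂ = p₃ -ᵥ p₄ := vsub_eq_vsub_of_rhombus hV n14 n23 h12 h24 h13 h34
  have r3784 : p₃ -ᵥ p₇ = p₄ -ᵥ p₈ := vsub_eq_vsub_of_rhombus hV n38 n74 h37 h78 h34 h48
  have r5687 : p₅ -ᵥ p₆ = p₇ -ᵥ p₈ := vsub_eq_vsub_of_rhombus hV n58 n67 h56 h68 h57 h78
  have r1573 : p₁ -ᵥ p₅ = p₃ -ᵥ p₇ := vsub_eq_vsub_of_rhombus hV n17 n53 h15 h57 h13 h37
  have r1265 : p₁ -ᵥ p₂ = p₅ -ᵥ p₆ :=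
    r1243.trans <| (vsub_eq_vsub_iff_vsub_eq_vsub.mp r3784).trans r5687.symm
  have r2651 : p₂ -ᵥ p₆ = p₁ -ᵥ p₅ := (vsub_eq_vsub_iff_vsub_eq_vsub.mp r1265).symm
  have r2376 : p₂ -ᵥ p₃ = p₆ -ᵥ p₇ := vsub_eq_vsub_iff_vsub_eq_vsub.mp (r2651.trans r1573)
  exact ⟨(dist_eq_dist_of_vsub_eq_vsub r2376).symm.trans h23,
    (dist_eq_dist_of_vsub_eq_vsub r2651).trans h15⟩

end EuclideanPlane

theorem totally_unfaithful_eight :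
    ∀ φ : ℕ → EuclideanSpace ℝ (Fin 2),
    Set.InjOn φ (Set.Icc 1 8) →
    dist (φ 1) (φ 2) = 1 →
    dist (φ 1) (φ 3) = 1 →
    dist (φ 2) (φ 3) = 1 →
    dist (φ 2) (φ 4) = 1 →
    dist (φ 3) (φ 4) = 1 →
    dist (φ 5) (φ 6) = 1 →
    dist (φ 5) (φ 7) = 1 →
    dist (φ 6) (φ 8) = 1 →
    dist (φ 7) (φ 8) = 1 →
    dist (φ 1) (φ 5) = 1 →
    dist (φ 3) (φ 7) = 1 →
    dist (φ 4) (φ 8) = 1 →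
    dist (φ 6) (φ 7) = 1 ∧ dist (φ 2) (φ 6) = 1 := by
  intro φ hφ
  apply totally_unfaithful_eight_general finrank_euclideanSpace_fin <;>
    exact hφ.ne (by simp) (by simp) (by simp)
end

section
/- The graph H₂, defined as the simple graph on vertex set {1,...,9} with edge set {{1,2},{2,4},{3,4},{1,3},{2,3},{4,8},{8,9},{7,9},{4,7},{1,5},{5,6},{1,6},{5,7},{6,8},{4,9}}, is unit-distance: there exists an injective map φ : {1,...,9} → ℝ² with dist(φ(i), φ(j)) = 1 for every edge {i,j}. -/
/-!
Identify the plane with `ℂ` and let `ω = exp (π i / 6)`. The rhombus `1, 2, 4, 3` is fixed with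
its long diagonal from `0` to `√3`, the triangle `1, 5, 6` is turned about `0` by a unit number `a`,
and the rhombus `4, 7, 9, 8` about `√3` by a unit number `b`. It remains to make the two struts
`5 7` and `6 8` of length one. Conjugation exchanges the two strut conditions, and taking their sum
and difference determines `b` from `a`. With `a.re = 1 - t / 2`, the surviving condition `‖b‖ = 1`
then collapses to `18 * t ^ 3 = 2`.
-/

open scoped ComplexConjugate

lemma norm_eq_one_iff_re_sq_add_im_sq {z : ℂ} : ‖z‖ = 1 ↔ z.re ^ 2 + z.im ^ 2 = 1 := by
  rw [← pow_eq_one_iff_of_nonneg (norm_nonneg z) two_ne_zero, Complex.sq_norm,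
    Complex.normSq_apply, sq, sq]

/-- The primitive twelfth root of unity `exp (π i / 6)`, in Cartesian form. It is chosen so that
`u * conj ω` and `u * ω` complete `0` to an equilateral triangle with axis in direction `u`. -/
noncomputable def twelfthRoot : ℂ := ⟨√3 / 2, 1 / 2⟩

local notation "ω" => twelfthRoot

@[simp]
lemma twelfthRoot_re : twelfthRoot.re = √3 / 2 := rfl

@[simp]
lemma twelfthRoot_im : twelfthRoot.im = 1 / 2 := rfl

lemma twelfthRoot_add_conj : ω + conj ω = (√3 : ℝ) := by
  rw [Complex.add_conj, twelfthRoot_re]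
  congr 1
  ring

lemma twelfthRoot_sub_conj : ω - conj ω = Complex.I := by
  simp [Complex.sub_conj]

lemma norm_twelfthRoot : ‖ω‖ = 1 := by
  rw [norm_eq_one_iff_re_sq_add_im_sq, twelfthRoot_re, twelfthRoot_im]
  linarith [Real.sq_sqrt (zero_le_three (α := ℝ))]

lemma twelfthRoot_mul_conj : ω * conj ω = 1 := by
  simp [Complex.mul_conj', norm_twelfthRoot]

lemma twelfthRoot_sq : ω ^ 2 = ⟨1 / 2, √3 / 2⟩ := by
  apply Complex.ext
  · simp only [sq, Complex.mul_re, twelfthRoot_re, twelfthRoot_im]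
    linarith [Real.mul_self_sqrt (zero_le_three (α := ℝ))]
  · simp only [sq, Complex.mul_im, twelfthRoot_re, twelfthRoot_im]
    ring

lemma norm_twelfthRoot_sq_sub_one : ‖ω ^ 2 - 1‖ = 1 := by
  rw [← twelfthRoot_mul_conj, sq, ← mul_sub, twelfthRoot_sub_conj, norm_mul, norm_twelfthRoot,
    Complex.norm_I, one_mul]

lemma dist_mul_conj_twelfthRoot_mul_twelfthRoot (u : ℂ) : dist (u * conj ω) (u * ω) = ‖u‖ := by
  rw [dist_comm, dist_eq_norm, ← mul_sub, twelfthRoot_sub_conj, norm_mul, Complex.norm_I, mul_one]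

lemma dist_twelfthRoot_conj : dist ω (conj ω) = 1 := by
  rw [dist_eq_norm, twelfthRoot_sub_conj, Complex.norm_I]

lemma dist_twelfthRoot_sqrt_three : dist ω (√3 : ℝ) = 1 := by
  rw [← twelfthRoot_add_conj, dist_self_add_right, RCLike.norm_conj, norm_twelfthRoot]

lemma dist_conj_twelfthRoot_sqrt_three : dist (conj ω) (√3 : ℝ) = 1 := by
  rw [← twelfthRoot_add_conj, add_comm, dist_self_add_right, norm_twelfthRoot]

lemma dist_mul_twelfthRoot_sq_self (u : ℂ) : dist (u * ω ^ 2) u = ‖u‖ := by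
  rw [dist_eq_norm, ← mul_sub_one, norm_mul, norm_twelfthRoot_sq_sub_one, mul_one]

lemma dist_mul_conj_twelfthRoot_sq_self (u : ℂ) : dist (u * conj ω ^ 2) u = ‖u‖ := by
  simpa using (Complex.dist_conj_conj _ _).trans (dist_mul_twelfthRoot_sq_self (conj u))

/-- The placement of the vertices `1, …, 9` of `H₂` in the complex plane in which the triangle
`1, 5, 6` points from vertex `1` in direction `a`, and the rhombus `4, 7, 9, 8` points from
vertex `4` in direction `b`. Indices outside `1, …, 9` carry the junk value `0`. -/
noncomputable def placement (a b : ℂ) : ℕ → ℂ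
  | 2 => ω
  | 3 => conj ω
  | 4 => (√3 : ℝ)
  | 5 => a * conj ω
  | 6 => a * ω
  | 7 => (√3 : ℝ) + b * ω ^ 2
  | 8 => (√3 : ℝ) + b * conj ω ^ 2
  | 9 => (√3 : ℝ) + b
  | _ => 0

lemma sq_norm_strut (a b : ℂ) :
    ‖a * conj ω - ((√3 : ℝ) + b * ω ^ 2)‖ ^ 2 =
      ‖a‖ ^ 2 + ‖b‖ ^ 2 + 3 - 3 * a.re - √3 * a.im + √3 * b.re - 3 * b.im
        - 2 * (a.im * b.re - a.re * b.im) := by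
  have h3 : √3 ^ 2 = 3 := Real.sq_sqrt zero_le_three
  rw [twelfthRoot_sq]
  simp only [Complex.sq_norm, Complex.normSq_apply, Complex.sub_re, Complex.sub_im, Complex.add_re,
    Complex.add_im, Complex.mul_re, Complex.mul_im, Complex.conj_re, Complex.conj_im,
    Complex.ofReal_re, Complex.ofReal_im, twelfthRoot_re, twelfthRoot_im]
  linear_combination (1 - a.re - b.im + (a.re * b.im - a.im * b.re) / 2
    + (a.re ^ 2 + a.im ^ 2 + b.re ^ 2 + b.im ^ 2) / 4) * h3

lemma dist_strut_eq_one {a b : ℂ} (ha : ‖a‖ = 1) (hb : ‖b‖ = 1) (hre : √3 * b.re = 3 * a.re - 4)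
    (him : (3 - 2 * a.re) * b.im = -(√3 + 2 * b.re) * a.im) :
    dist (a * conj ω) ((√3 : ℝ) + b * ω ^ 2) = 1 := by
  rw [dist_eq_norm, ← pow_eq_one_iff_of_nonneg (norm_nonneg _) two_ne_zero, sq_norm_strut, ha, hb]
  linarith

lemma dist_conj_strut_eq_one {a b : ℂ} (ha : ‖a‖ = 1) (hb : ‖b‖ = 1)
    (hre : √3 * b.re = 3 * a.re - 4) (him : (3 - 2 * a.re) * b.im = -(√3 + 2 * b.re) * a.im) :
    dist (a * ω) ((√3 : ℝ) + b * conj ω ^ 2) = 1 := by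
  have h : dist (conj a * conj ω) ((√3 : ℝ) + conj b * ω ^ 2) = 1 := by
    apply dist_strut_eq_one (by simpa using ha) (by simpa using hb)
    · simpa using hre
    · simp only [Complex.conj_re, Complex.conj_im]
      linarith
  rw [← Complex.dist_conj_conj]
  simpa using h

/-- The direction of the triangle `1, 5, 6`: the unit number in the upper half plane with real
part `1 - t / 2`. For `t` outside `[0, 4]` the square root is a junk `0`. -/
noncomputable def triangleDirection (t : ℝ) : ℂ := ⟨1 - t / 2, √(t - t ^ 2 / 4)⟩

/-- The direction of the rhombus `4, 7, 9, 8` that balances `triangleDirection t`: the solution `b`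
of the two equations in `dist_strut_eq_one`, which are linear in `b`. It is junk at `t = -1`. -/
noncomputable def rhombusDirection (t : ℝ) : ℂ :=
  ⟨-(1 + 3 / 2 * t) / √3, √(t - t ^ 2 / 4) * (3 * t - 1) / (√3 * (1 + t))⟩

lemma sqrt_three_mul_rhombusDirection_re (t : ℝ) :
    √3 * (rhombusDirection t).re = 3 * (triangleDirection t).re - 4 := by
  simp only [rhombusDirection, triangleDirection]
  field_simp
  ring

lemma mul_rhombusDirection_im {t : ℝ} (ht : 1 + t ≠ 0) :
    (3 - 2 * (triangleDirection t).re) * (rhombusDirection t).im =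
      -(√3 + 2 * (rhombusDirection t).re) * (triangleDirection t).im := by
  have h3 : √3 ^ 2 = 3 := Real.sq_sqrt zero_le_three
  simp only [rhombusDirection, triangleDirection]
  field_simp
  rw [h3]
  ring

lemma norm_triangleDirection {t : ℝ} (ht : 0 ≤ t - t ^ 2 / 4) : ‖triangleDirection t‖ = 1 := by
  rw [norm_eq_one_iff_re_sq_add_im_sq, triangleDirection]
  linarith [Real.sq_sqrt ht]

lemma norm_rhombusDirection {t : ℝ} (ht : 0 ≤ t - t ^ 2 / 4) (ht3 : t ^ 3 = 1 / 9) :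
    ‖rhombusDirection t‖ = 1 := by
  have h3 : √3 ^ 2 = 3 := Real.sq_sqrt zero_le_three
  have hs : √(t - t ^ 2 / 4) ^ 2 = t - t ^ 2 / 4 := Real.sq_sqrt ht
  have ht1 : 1 + t ≠ 0 := by
    intro h
    norm_num [eq_neg_of_add_eq_zero_right h] at ht3
  have closing : (1 + 3 / 2 * t) ^ 2 * (1 + t) ^ 2 + (t - t ^ 2 / 4) * (3 * t - 1) ^ 2 =
      3 * (1 + t) ^ 2 + 2 * (9 * t ^ 3 - 1) := by
    ring
  rw [norm_eq_one_iff_re_sq_add_im_sq, rhombusDirection]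
  calc
    _ = ((1 + 3 / 2 * t) ^ 2 * (1 + t) ^ 2 + √(t - t ^ 2 / 4) ^ 2 * (3 * t - 1) ^ 2) /
          (√3 ^ 2 * (1 + t) ^ 2) := by field_simp
    _ = 1 := by
      rw [hs, h3, closing, ht3]
      field_simp
      ring

lemma sqrt_three_mem_Ioo : √3 ∈ Set.Ioo (1.73 : ℝ) 1.74 :=
  ⟨Real.lt_sqrt_of_sq_lt (by norm_num), (Real.sqrt_lt' (by norm_num)).2 (by norm_num)⟩

lemma triangleDirection_mem_box {t : ℝ} (ht : t ∈ Set.Ioo (0.48 : ℝ) 0.481) :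
    triangleDirection t ∈ Set.Ioo (0.75 : ℝ) 0.77 ×ℂ Set.Ioo (0.64 : ℝ) 0.66 := by
  obtain ⟨hlo, hhi⟩ := ht
  refine ⟨⟨?_, ?_⟩, Real.lt_sqrt_of_sq_lt ?_, (Real.sqrt_lt' (by norm_num)).2 ?_⟩
  · change 0.75 < 1 - t / 2
    linarith
  · change 1 - t / 2 < 0.77
    linarith
  · nlinarith
  · nlinarith

lemma rhombusDirection_mem_box {t : ℝ} (ht : t ∈ Set.Ioo (0.48 : ℝ) 0.481) :
    rhombusDirection t ∈ Set.Ioo (-1 : ℝ) (-0.98) ×ℂ Set.Ioo (0.1 : ℝ) 0.12 := by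
  obtain ⟨-, hs⟩ := triangleDirection_mem_box ht
  obtain ⟨hs_lo, hs_hi⟩ : √(t - t ^ 2 / 4) ∈ Set.Ioo (0.64 : ℝ) 0.66 := hs
  obtain ⟨hlo, hhi⟩ := ht
  obtain ⟨h3_lo, h3_hi⟩ := sqrt_three_mem_Ioo
  have hden : 0 < √3 * (1 + t) := by nlinarith
  refine ⟨⟨?_, ?_⟩, ?_, ?_⟩
  · exact (lt_div_iff₀ (by linarith)).2 (by linarith)
  · exact (div_lt_iff₀ (by linarith)).2 (by linarith)
  · exact (lt_div_iff₀ hden).2 (by nlinarith)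
  · exact (div_lt_iff₀ hden).2 (by nlinarith)

lemma injOn_of_isChain_lt_map {α β : Type*} [Preorder β] {f : α → β} {l : List α}
    (h : (l.map f).IsChain (· < ·)) : Set.InjOn f {x | x ∈ l} := by
  have nodup : (l.map f).Nodup := h.pairwise.imp ne_of_lt
  exact fun x hx y hy ↦ List.inj_on_of_nodup_map nodup hx hy

/-- A linear coordinate on the plane that separates the vertices of `H₂`; the real part alone does
not separate the vertices `2` and `3`. -/
noncomputable def tiltedRe (z : ℂ) : ℝ := z.re + z.im / 20

lemma isChain_tiltedRe_placement {a b : ℂ}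
    (ha : a ∈ Set.Ioo (0.75 : ℝ) 0.77 ×ℂ Set.Ioo (0.64 : ℝ) 0.66)
    (hb : b ∈ Set.Ioo (-1 : ℝ) (-0.98) ×ℂ Set.Ioo (0.1 : ℝ) 0.12) :
    ([1, 6, 9, 3, 2, 5, 7, 8, 4].map (tiltedRe ∘ placement a b)).IsChain (· < ·) := by
  obtain ⟨⟨ha_re_lo, ha_re_hi⟩, ha_im_lo, ha_im_hi⟩ := ha
  obtain ⟨⟨hb_re_lo, hb_re_hi⟩, hb_im_lo, hb_im_hi⟩ := hb
  obtain ⟨h3_lo, h3_hi⟩ := sqrt_three_mem_Ioo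
  simp only [List.map_cons, List.map_nil, List.isChain_cons_cons, List.IsChain.singleton, and_true,
    Function.comp_apply, tiltedRe, placement, ← map_pow, twelfthRoot_sq, Complex.zero_re,
    Complex.zero_im, Complex.add_re, Complex.add_im, Complex.mul_re, Complex.mul_im,
    Complex.conj_re, Complex.conj_im, Complex.ofReal_re, Complex.ofReal_im, twelfthRoot_re,
    twelfthRoot_im]
  refine ⟨?_, ?_, ?_, ?_, ?_, ?_, ?_, ?_⟩ <;> nlinarith

lemma injOn_placement {a b : ℂ} (ha : a ∈ Set.Ioo (0.75 : ℝ) 0.77 ×ℂ Set.Ioo (0.64 : ℝ) 0.66)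
    (hb : b ∈ Set.Ioo (-1 : ℝ) (-0.98) ×ℂ Set.Ioo (0.1 : ℝ) 0.12) :
    Set.InjOn (placement a b) (Set.Icc 1 9) := by
  have h : Set.InjOn (placement a b) {n | n ∈ [1, 6, 9, 3, 2, 5, 7, 8, 4]} :=
    (injOn_of_isChain_lt_map (isChain_tiltedRe_placement ha hb)).of_comp
  refine h.mono ?_
  rintro n ⟨h1, h9⟩
  interval_cases n <;> simp

lemma exists_pow_three_eq_one_div_nine : ∃ t ∈ Set.Ioo (0.48 : ℝ) 0.481, t ^ 3 = 1 / 9 := by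
  have hcont : ContinuousOn (fun t : ℝ ↦ t ^ 3) (Set.Icc 0.48 0.481) := by fun_prop
  exact intermediate_value_Ioo (by norm_num) hcont (by norm_num)

theorem H2_unit_distance :
    ∃ φ : ℕ → EuclideanSpace ℝ (Fin 2),
      Set.InjOn φ (Set.Icc 1 9) ∧
      dist (φ 1) (φ 2) = 1 ∧
      dist (φ 2) (φ 4) = 1 ∧
      dist (φ 3) (φ 4) = 1 ∧
      dist (φ 1) (φ 3) = 1 ∧
      dist (φ 2) (φ 3) = 1 ∧
      dist (φ 4) (φ 8) = 1 ∧
      dist (φ 8) (φ 9) = 1 ∧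
      dist (φ 7) (φ 9) = 1 ∧
      dist (φ 4) (φ 7) = 1 ∧
      dist (φ 1) (φ 5) = 1 ∧
      dist (φ 5) (φ 6) = 1 ∧
      dist (φ 1) (φ 6) = 1 ∧
      dist (φ 5) (φ 7) = 1 ∧
      dist (φ 6) (φ 8) = 1 ∧
      dist (φ 4) (φ 9) = 1 := by
  obtain ⟨t, ht, ht3⟩ := exists_pow_three_eq_one_div_nine
  have ht_nonneg : 0 ≤ t - t ^ 2 / 4 := by nlinarith [ht.1, ht.2]
  have ha := norm_triangleDirection ht_nonneg
  have hb := norm_rhombusDirection ht_nonneg ht3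
  have hre := sqrt_three_mul_rhombusDirection_re t
  have him := mul_rhombusDirection_im (t := t) (by linarith [ht.1])
  have hinj := injOn_placement (triangleDirection_mem_box ht) (rhombusDirection_mem_box ht)
  let toPlane := Complex.orthonormalBasisOneI.repr
  refine ⟨toPlane ∘ placement (triangleDirection t) (rhombusDirection t),
    toPlane.injective.comp_injOn hinj, ?_⟩
  simp only [Function.comp_apply, LinearIsometryEquiv.dist_map, placement]
  simp [dist_twelfthRoot_sqrt_three, dist_conj_twelfthRoot_sqrt_three, dist_twelfthRoot_conj,
    dist_mul_conj_twelfthRoot_mul_twelfthRoot, dist_mul_twelfthRoot_sq_self,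
    dist_mul_conj_twelfthRoot_sq_self, dist_strut_eq_one ha hb hre him,
    dist_conj_strut_eq_one ha hb hre him, ha, hb, norm_twelfthRoot]
end
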